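/- Let d ≥ 1, let f : ℝ^d → ℝ be continuously differentiable with L-Lipschitz gradient, and let μ > 0. Define the ball-smoothed function f_μ(x) = E_u[f(x+μu)], where u is uniformly distributed on the closed unit Euclidean ball of ℝ^d. Then f_μ is differentiable and for every x ∈ ℝ^d, ∇f_μ(x) = E_v[(d/μ)(f(x+μv) − f(x)) v], where v is uniformly distributed on the unit sphere S^{d−1} ⊂ ℝ^d (expectation with respect to the normalized surface measure); in particular, the single-sample zeroth-order estimator (d/μ)(f(x+μv) − f(x)) v is an unbiased estimator of ∇f_μ(x). -/

import Mathlib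

open MeasureTheory Metric
open scoped ENNReal RealInnerProductSpace

/-- Uniform probability measure on the closed unit Euclidean ball of `ℝ^d`
(normalized Lebesgue measure on the ball). -/
noncomputable def ballUniform (d : ℕ) : Measure (EuclideanSpace ℝ (Fin d)) :=
  (volume (closedBall (0 : EuclideanSpace ℝ (Fin d)) 1))⁻¹ •
    volume.restrict (closedBall (0 : EuclideanSpace ℝ (Fin d)) 1)

/-- Uniform probability measure on the unit Euclidean sphere of `ℝ^d`, realized as the
pushforward of the uniform measure on the unit ball under the radial projection
`x ↦ x/‖x‖`; this coincides with the normalized surface (rotation invariant) measure. -/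
noncomputable def sphereUniform (d : ℕ) : Measure (EuclideanSpace ℝ (Fin d)) :=
  (ballUniform d).map fun x => ‖x‖⁻¹ • x

namespace SGS
open Filter Topology Set
local notation "𝔼" d => EuclideanSpace ℝ (Fin d)

lemma integral_homog {d : ℕ} (H : (𝔼 d) → ℝ) (hH : ∀ c : ℝ, 0 < c → ∀ u, H (c • u) = H u)
    {R : ℝ} (hR : 0 < R) :
    ∫ u in closedBall (0 : 𝔼 d) R, H u = R ^ d * ∫ u in closedBall (0 : 𝔼 d) 1, H u := by
  have h := Measure.setIntegral_comp_smul_of_pos (volume : Measure (𝔼 d)) H (closedBall 0 1) hR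
  rw [smul_closedBall R (0 : 𝔼 d) zero_le_one] at h
  simp only [hH R hR, smul_zero, Real.norm_eq_abs, abs_of_pos hR, mul_one, smul_eq_mul,
    finrank_euclideanSpace_fin] at h
  rw [h]
  field_simp

lemma hasFDerivAt_norm' {d : ℕ} {u : 𝔼 d} (hu : u ≠ 0) :
    HasFDerivAt (fun x : 𝔼 d => ‖x‖) (‖u‖⁻¹ • innerSL ℝ u) u := by
  have h := (hasStrictFDerivAt_norm_sq u).hasFDerivAt.sqrt (by simpa using hu)
  simp only [Real.sqrt_sq (norm_nonneg _)] at h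
  refine h.congr_fderiv ?_
  ext v
  simp
  field_simp

/-- The cutoff. -/
noncomputable def cut (d : ℕ) (ε : ℝ) (u : 𝔼 d) : ℝ := max 0 (min ε (1 + ε - ‖u‖))

lemma cut_lip (d : ℕ) (ε : ℝ) : LipschitzWith 1 (cut d ε) := by
  have h1 : LipschitzWith 1 (fun u : 𝔼 d => 1 + ε - ‖u‖) := by
    apply LipschitzWith.of_dist_le_mul
    intro x y
    rw [Real.dist_eq, dist_eq_norm]
    have := abs_norm_sub_norm_le y x
    rw [norm_sub_rev] at this
    simpa using this
  exact (h1.const_min ε).const_max 0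

lemma cut_supp (d : ℕ) (ε : ℝ) (hε : 0 < ε) : HasCompactSupport (cut d ε) := by
  apply HasCompactSupport.intro (isCompact_closedBall (0 : 𝔼 d) (1 + ε))
  intro x hx
  simp only [mem_closedBall, dist_zero_right, not_le] at hx
  unfold cut
  rw [max_eq_left]
  exact (min_le_right _ _).trans (by linarith)

lemma cut_ball (d : ℕ) (ε : ℝ) (hε : 0 < ε) (u : 𝔼 d) (hu : ‖u‖ ≤ 1) : cut d ε u = ε := by
  unfold cut
  rw [min_eq_left (by linarith), max_eq_right hε.le]

lemma cut_out (d : ℕ) (ε : ℝ) (u : 𝔼 d) (hu : 1 + ε ≤ ‖u‖) : cut d ε u = 0 := by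
  unfold cut
  rw [max_eq_left]
  exact (min_le_right _ _).trans (by linarith)

lemma cut_mid (d : ℕ) (ε : ℝ) (u : 𝔼 d) (hu : 1 ≤ ‖u‖) (hu' : ‖u‖ ≤ 1 + ε) :
    cut d ε u = 1 + ε - ‖u‖ := by
  unfold cut
  rw [min_eq_right (by linarith), max_eq_right (by linarith)]

lemma cut_abs (d : ℕ) (ε : ℝ) (hε : 0 < ε) (u : 𝔼 d) : |cut d ε u| ≤ ε := by
  unfold cut
  rw [abs_of_nonneg (le_max_left _ _)]
  exact max_le hε.le (min_le_left _ _)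

lemma lineDeriv_cut (d : ℕ) (ε : ℝ) (hε : 0 < ε) (u e : 𝔼 d) (h1 : ‖u‖ ≠ 1) (h2 : ‖u‖ ≠ 1 + ε) :
    lineDeriv ℝ (cut d ε) u (-e) =
      (closedBall (0 : 𝔼 d) (1 + ε) \ closedBall 0 1).indicator
        (fun u => ‖u‖⁻¹ * ⟪u, e⟫) u := by
  have hc : Continuous (fun x : 𝔼 d => ‖x‖) := continuous_norm
  rcases lt_or_gt_of_ne h1 with h | h
  · have : cut d ε =ᶠ[𝓝 u] fun _ => ε := by
      filter_upwards [hc.continuousAt.eventually_lt_const h] with x hx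
      exact cut_ball d ε hε x hx.le
    rw [indicator_of_notMem (by simp [h.le]), this.lineDeriv_eq]
    simp [lineDeriv]
  · rcases lt_or_gt_of_ne h2 with h' | h'
    · have : cut d ε =ᶠ[𝓝 u] fun x => 1 + ε - ‖x‖ := by
        filter_upwards [hc.continuousAt.eventually_lt_const h',
          hc.continuousAt.eventually_const_lt h] with x hx hx'
        exact cut_mid d ε x hx'.le hx.le
      have hu : u ≠ 0 := by rintro rfl; simp at h; linarith
      rw [indicator_of_mem (by simp [h, h'.le]), this.lineDeriv_eq,
        (((hasFDerivAt_norm' hu).const_sub (1 + ε)).hasLineDerivAt (-e)).lineDeriv]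
      simp
    · have : cut d ε =ᶠ[𝓝 u] fun _ => 0 := by
        filter_upwards [hc.continuousAt.eventually_const_lt h'] with x hx
        exact cut_out d ε x hx.le
      rw [indicator_of_notMem (by simp [h']), this.lineDeriv_eq]
      simp [lineDeriv]

lemma key_ineq {d : ℕ} (hd : 1 ≤ d) (g : (𝔼 d) → ℝ) (hg : ContDiff ℝ 1 g)
    (hs : HasCompactSupport g) (e : 𝔼 d) :
    ∃ C : ℝ, ∀ ε : ℝ, 0 < ε → 
      |ε * (∫ u in closedBall (0 : 𝔼 d) 1, fderiv ℝ g u e) - ((1 + ε) ^ d - 1) *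
        ∫ u in closedBall (0 : 𝔼 d) 1, g (‖u‖⁻¹ • u) * (‖u‖⁻¹ * ⟪u, e⟫)| ≤
      ε * (C * ((1 + ε) ^ d - 1)) := by
  have : Nonempty (Fin d) := ⟨⟨0, hd⟩⟩
  obtain ⟨K, hK⟩ := hg.lipschitzWith_of_hasCompactSupport hs one_ne_zero
  have hgc := hg.continuous
  have hdg : ∀ u, ‖fderiv ℝ g u e‖ ≤ K * ‖e‖ := fun u =>
    (ContinuousLinearMap.le_opNorm _ _).trans (by gcongr; exact norm_fderiv_le_of_lipschitz ℝ hK)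
  have hdc : Continuous (fun u => fderiv ℝ g u e) := by
    exact (hg.continuous_fderiv one_ne_zero).clm_apply continuous_const
  have hh : ∀ u : 𝔼 d, |‖u‖⁻¹ * ⟪u, e⟫| ≤ ‖e‖ := by
    intro u
    rw [abs_mul, abs_inv, abs_norm]
    by_cases hu : u = 0
    · simp [hu]
    · have : 0 < ‖u‖ := norm_pos_iff.2 hu
      rw [inv_mul_le_iff₀ this]
      exact abs_real_inner_le_norm u e
  have hhm : Measurable (fun u : 𝔼 d => ‖u‖⁻¹ * ⟪u, e⟫) := by fun_prop
  set H : (𝔼 d) → ℝ := fun u => g (‖u‖⁻¹ • u) * (‖u‖⁻¹ * ⟪u, e⟫) with hHdef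
  have hHm : Measurable H := by
    refine Measurable.mul (hgc.measurable.comp ?_) hhm
    fun_prop
  have hHh : ∀ c : ℝ, 0 < c → ∀ u, H (c • u) = H u := by
    intro c hc u
    have h1 : ‖c • u‖⁻¹ • c • u = ‖u‖⁻¹ • u := by
      rw [norm_smul, Real.norm_eq_abs, abs_of_pos hc, smul_smul, mul_inv]
      congr 1
      field_simp
    have h2 : ‖c • u‖⁻¹ * ⟪c • u, e⟫ = ‖u‖⁻¹ * ⟪u, e⟫ := by
      rw [← real_inner_smul_left, h1, real_inner_smul_left]
    simp only [hHdef, h1, h2]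
  obtain ⟨M, hM⟩ := hs.exists_bound_of_continuous hgc
  have hM0 : 0 ≤ M := (norm_nonneg _).trans (hM 0)
  have hHb : ∀ u, ‖H u‖ ≤ M * ‖e‖ := by
    intro u
    rw [norm_mul]
    exact mul_le_mul (hM _) (hh u) (norm_nonneg _) hM0
  have hHi : ∀ R, IntegrableOn H (closedBall (0 : 𝔼 d) R) := fun R =>
    Measure.integrableOn_of_bounded (measure_closedBall_lt_top.ne) hHm.aestronglyMeasurable
      (M := M * ‖e‖) (Eventually.of_forall hHb)
  set V := volume.real (closedBall (0 : 𝔼 d) 1) with hV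
  refine ⟨2 * K * ‖e‖ * V, fun ε hε => ?_⟩
  set A := closedBall (0 : 𝔼 d) (1 + ε) \ closedBall 0 1 with hA
  have hsub : closedBall (0 : 𝔼 d) 1 ⊆ closedBall 0 (1 + ε) := closedBall_subset_closedBall (by linarith)
  have hAm : MeasurableSet A := measurableSet_closedBall.diff measurableSet_closedBall
  have hAfin : volume A < ∞ := (measure_mono Set.sdiff_subset).trans_lt measure_closedBall_lt_top
  have hAV : volume.real A = ((1 + ε) ^ d - 1) * V := by
    rw [hA, measureReal_sdiff hsub measurableSet_closedBall measure_closedBall_lt_top.ne,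
      Measure.addHaar_real_closedBall' _ _ (by linarith : (0:ℝ) ≤ 1 + ε)]
    simp [hV]; ring
  have hAH : ∫ u in A, H u = ((1 + ε) ^ d - 1) * ∫ u in closedBall (0 : 𝔼 d) 1, H u := by
    rw [hA, setIntegral_sdiff measurableSet_closedBall (hHi _) hsub,
      integral_homog H hHh (by linarith : 0 < 1 + ε)]
    ring
  have hparts := LipschitzWith.integral_lineDeriv_mul_eq (μ := (volume : Measure (𝔼 d)))
    hK (cut_lip d ε) (cut_supp d ε hε) e
  have hcutc := (cut_lip d ε).continuous
  -- left side
  have hL : ∫ x, lineDeriv ℝ g x e * cut d ε x =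
      ε * (∫ u in closedBall (0 : 𝔼 d) 1, fderiv ℝ g u e) + ∫ u in A, fderiv ℝ g u e * cut d ε u := by
    have e1 : ∀ x, lineDeriv ℝ g x e = fderiv ℝ g x e := fun x =>
      ((hg.differentiable one_ne_zero) x).lineDeriv_eq_fderiv
    simp_rw [e1]
    have hint : Integrable (fun x => fderiv ℝ g x e * cut d ε x) :=
      (hdc.mul hcutc).integrable_of_hasCompactSupport ((cut_supp d ε hε).mul_left)
    rw [← setIntegral_eq_integral_of_forall_compl_eq_zero (s := closedBall (0 : 𝔼 d) (1 + ε))]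
    · rw [← Set.sdiff_union_of_subset hsub, setIntegral_union disjoint_sdiff_left measurableSet_closedBall
        hint.integrableOn hint.integrableOn, add_comm, ← integral_const_mul]
      congr 1
      apply setIntegral_congr_fun measurableSet_closedBall
      intro x hx
      simp only
      rw [cut_ball d ε hε x (by simpa using hx)]
      ring
    · intro x hx
      rw [cut_out d ε x (by simp at hx; exact hx.le), mul_zero]
  have hR : ∫ x, lineDeriv ℝ (cut d ε) x (-e) * g x = ∫ u in A, (‖u‖⁻¹ * ⟪u, e⟫) * g u := by
    rw [← integral_indicator hAm]
    apply integral_congr_ae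
    have s1 : ∀ r : ℝ, ∀ᵐ x : 𝔼 d, ‖x‖ ≠ r := by
      intro r
      have := Measure.addHaar_sphere (volume : Measure (𝔼 d)) 0 r
      filter_upwards [measure_eq_zero_iff_ae_notMem.1 this] with x hx
      simpa using hx
    filter_upwards [s1 1, s1 (1 + ε)] with x h1 h2
    rw [lineDeriv_cut d ε hε x e h1 h2]
    by_cases hx : x ∈ A
    · rw [indicator_of_mem hx, indicator_of_mem hx]
    · rw [indicator_of_notMem hx, indicator_of_notMem hx, zero_mul]
  have hRi : IntegrableOn (fun u : 𝔼 d => (‖u‖⁻¹ * ⟪u, e⟫) * g u) A := by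
    refine Measure.integrableOn_of_bounded hAfin.ne
      (hhm.mul hgc.measurable).aestronglyMeasurable (M := ‖e‖ * M) (Eventually.of_forall ?_)
    intro u
    rw [norm_mul]
    exact mul_le_mul (hh u) (hM _) (norm_nonneg _) (norm_nonneg _)
  have b1 : |∫ u in A, fderiv ℝ g u e * cut d ε u| ≤ (K * ‖e‖ * ε) * volume.real A := by
    rw [← Real.norm_eq_abs]
    apply norm_setIntegral_le_of_norm_le_const hAfin
    intro x _
    rw [norm_mul]
    exact mul_le_mul (hdg x) (cut_abs d ε hε x) (norm_nonneg _) (by positivity)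
  have b2 : |(∫ u in A, (‖u‖⁻¹ * ⟪u, e⟫) * g u) - ∫ u in A, H u| ≤
      (K * ‖e‖ * ε) * volume.real A := by
    rw [← integral_sub hRi ((hHi _).mono_set Set.sdiff_subset), ← Real.norm_eq_abs]
    apply norm_setIntegral_le_of_norm_le_const hAfin
    intro x hx
    simp only [hA, Set.mem_sdiff, mem_closedBall, dist_zero_right, not_le] at hx
    have hx0 : 0 < ‖x‖ := by linarith
    have : ‖g x - g (‖x‖⁻¹ • x)‖ ≤ K * ε := by
      rw [← dist_eq_norm]
      refine (hK.dist_le_mul _ _).trans ?_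
      gcongr
      rw [dist_eq_norm]
      have : x - ‖x‖⁻¹ • x = (1 - ‖x‖⁻¹) • x := by rw [sub_smul, one_smul]
      rw [this, norm_smul, Real.norm_eq_abs, abs_of_nonneg]
      · rw [sub_mul, inv_mul_cancel₀ hx0.ne']; linarith
      · rw [sub_nonneg]; exact inv_le_one_of_one_le₀ hx.2.le
    have e2 : (‖x‖⁻¹ * ⟪x, e⟫) * g x - H x = (‖x‖⁻¹ * ⟪x, e⟫) * (g x - g (‖x‖⁻¹ • x)) := by
      simp only [hHdef]; ring
    rw [e2, norm_mul]
    calc _ ≤ ‖e‖ * (K * ε) := mul_le_mul (hh x) this (norm_nonneg _) (norm_nonneg _)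
      _ = _ := by ring
  rw [hL, hR] at hparts
  rw [← hAH]
  rw [hAV] at b1 b2
  rw [abs_le] at *
  constructor <;> linarith [b1.1, b1.2, b2.1, b2.2]

lemma key_eq {d : ℕ} (hd : 1 ≤ d) (g : (𝔼 d) → ℝ) (hg : ContDiff ℝ 1 g)
    (hs : HasCompactSupport g) (e : 𝔼 d) :
    (∫ u in closedBall (0 : 𝔼 d) 1, fderiv ℝ g u e) =
      d * ∫ u in closedBall (0 : 𝔼 d) 1, g (‖u‖⁻¹ • u) * (‖u‖⁻¹ * ⟪u, e⟫) := by
  obtain ⟨C, hC⟩ := key_ineq hd g hg hs e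
  set P := ∫ u in closedBall (0 : 𝔼 d) 1, fderiv ℝ g u e
  set I := ∫ u in closedBall (0 : 𝔼 d) 1, g (‖u‖⁻¹ • u) * (‖u‖⁻¹ * ⟪u, e⟫)
  have hder : HasDerivAt (fun ε : ℝ => (1 + ε) ^ d) d 0 := by
    have := ((hasDerivAt_id (0 : ℝ)).const_add 1).fun_pow d
    simpa using this
  have t1 : Tendsto (fun ε : ℝ => ε⁻¹ * ((1 + ε) ^ d - 1)) (𝓝[>] 0) (𝓝 d) := by
    have := hder.tendsto_slope_zero_right
    simpa using this
  have t2 : Tendsto (fun ε : ℝ => |P - (ε⁻¹ * ((1 + ε) ^ d - 1)) * I|) (𝓝[>] 0) (𝓝 |P - d * I|) :=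
    (tendsto_const_nhds.sub (t1.mul_const I)).abs
  have t3 : Tendsto (fun ε : ℝ => C * ((1 + ε) ^ d - 1)) (𝓝[>] 0) (𝓝 0) := by
    have : Continuous (fun ε : ℝ => C * ((1 + ε) ^ d - 1)) := by fun_prop
    have := (this.tendsto 0).mono_left (nhdsWithin_le_nhds (s := Ioi 0))
    simpa using this
  have := le_of_tendsto_of_tendsto t2 t3 (by
    filter_upwards [self_mem_nhdsWithin] with ε hε
    have hε : 0 < ε := hε
    have h := hC ε hε
    have : ε * P - ((1 + ε) ^ d - 1) * I = ε * (P - ε⁻¹ * ((1 + ε) ^ d - 1) * I) := by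
      field_simp
    rw [this, abs_mul, abs_of_pos hε] at h
    exact le_of_mul_le_mul_left h hε)
  exact sub_eq_zero.1 (abs_eq_zero.1 (le_antisymm this (abs_nonneg _)))

lemma key_eq' {d : ℕ} (hd : 1 ≤ d) (g : (𝔼 d) → ℝ) (hg : ContDiff ℝ 1 g) (e : 𝔼 d) :
    (∫ u in closedBall (0 : 𝔼 d) 1, fderiv ℝ g u e) =
      d * ∫ u in closedBall (0 : 𝔼 d) 1, g (‖u‖⁻¹ • u) * (‖u‖⁻¹ * ⟪u, e⟫) := by
  let χ : ContDiffBump (0 : 𝔼 d) := ⟨2, 3, by norm_num, by norm_num⟩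
  have hone : ∀ x : 𝔼 d, ‖x‖ < 2 → χ x = 1 := fun x hx => by
    apply χ.one_of_mem_closedBall
    simpa using hx.le
  have h := key_eq hd (fun x => χ x * g x) (χ.contDiff.mul hg) (χ.hasCompactSupport.mul_right) e
  have h1 : ∀ u ∈ closedBall (0 : 𝔼 d) 1, fderiv ℝ (fun x => χ x * g x) u e = fderiv ℝ g u e := by
    intro u hu
    have : (fun x => χ x * g x) =ᶠ[𝓝 u] g := by
      have hu : ‖u‖ < 2 := by simp at hu; linarith
      filter_upwards [(continuous_norm (E := 𝔼 d)).continuousAt.eventually_lt_const hu] with x hx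
      rw [hone x hx, one_mul]
    rw [this.fderiv_eq]
  rw [setIntegral_congr_fun measurableSet_closedBall h1] at h
  rw [h]
  congr 2
  ext u
  rw [hone, one_mul]
  rw [norm_smul, norm_inv, norm_norm]
  by_cases hu : ‖u‖ = 0
  · simp [hu]
  · rw [inv_mul_cancel₀ hu]; norm_num

end SGS

/-- The gradient of the ball-smoothed function equals the expectation of the single-sample
zeroth-order (sphere-sampling) estimator: `∇f_μ(x) = E_v[(d/μ)(f(x+μv) − f(x)) v]`. -/
theorem smoothed_gradient_sphere_representation
    (d : ℕ) (hd : 1 ≤ d)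
    (f : EuclideanSpace ℝ (Fin d) → ℝ) (hf : ContDiff ℝ 1 f)
    (L : ℝ)
    (hlip : ∀ x₁ x₂, ‖gradient f x₁ - gradient f x₂‖ ≤ L * ‖x₁ - x₂‖)
    (μ : ℝ) (hμ : 0 < μ) :
    Differentiable ℝ (fun x => ∫ u, f (x + μ • u) ∂(ballUniform d)) ∧
    ∀ x, gradient (fun x' => ∫ u, f (x' + μ • u) ∂(ballUniform d)) x =
      ∫ v, (((d : ℝ) / μ) * (f (x + μ • v) - f x)) • v ∂(sphereUniform d) := by
  have hfc := hf.continuous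
  have hfd := hf.differentiable one_ne_zero
  have hf'c := hf.continuous_fderiv one_ne_zero
  have hVpos : volume (closedBall (0 : EuclideanSpace ℝ (Fin d)) 1) ≠ 0 :=
    (measure_closedBall_pos _ _ one_pos).ne'
  have hVfin : volume (closedBall (0 : EuclideanSpace ℝ (Fin d)) 1) ≠ ∞ :=
    measure_closedBall_lt_top.ne
  have hprob : IsFiniteMeasure (ballUniform d) := by
    constructor
    simp [ballUniform, ENNReal.inv_mul_cancel hVpos hVfin]
  have hae : ∀ᵐ u ∂(ballUniform d), ‖u‖ ≤ 1 := by
    apply Measure.ae_smul_measure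
    filter_upwards [ae_restrict_mem measurableSet_closedBall] with u hu
    simpa using hu
  have key : ∀ x, HasFDerivAt (fun x' => ∫ u, f (x' + μ • u) ∂(ballUniform d))
      (∫ u, fderiv ℝ f (x + μ • u) ∂(ballUniform d)) x := by
    intro x
    obtain ⟨M, hM⟩ := (isCompact_closedBall x (1 + μ)).exists_bound_of_continuousOn hf'c.continuousOn
    obtain ⟨N, hN⟩ := (isCompact_closedBall x (1 + μ)).exists_bound_of_continuousOn hfc.continuousOn
    have hmem : ∀ u : EuclideanSpace ℝ (Fin d), ‖u‖ ≤ 1 → ∀ y ∈ ball x 1,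
        y + μ • u ∈ closedBall x (1 + μ) := by
      intro u hu y hy
      rw [mem_ball, dist_eq_norm] at hy
      rw [mem_closedBall, dist_eq_norm, add_sub_right_comm]
      refine (norm_add_le _ _).trans ?_
      rw [norm_smul, Real.norm_eq_abs, abs_of_pos hμ]
      nlinarith
    apply hasFDerivAt_integral_of_dominated_of_fderiv_le (bound := fun _ => M)
      (F' := fun x u => fderiv ℝ f (x + μ • u)) (ball_mem_nhds x one_pos)
    · exact Filter.Eventually.of_forall fun y => by
        apply Continuous.aestronglyMeasurable; fun_prop
    · refine Integrable.of_bound (by apply Continuous.aestronglyMeasurable; fun_prop) N ?_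
      filter_upwards [hae] with u hu
      exact hN _ (hmem u hu x (mem_ball_self one_pos))
    · apply Continuous.aestronglyMeasurable; fun_prop
    · filter_upwards [hae] with u hu y hy
      exact hM _ (hmem u hu y hy)
    · exact integrable_const _
    · filter_upwards with u y _
      have h2 := (hfd (y + μ • u)).hasFDerivAt.comp y ((hasFDerivAt_id y).add_const (μ • u))
      exact h2.congr_fderiv (by ext; simp)
  refine ⟨fun x => (key x).differentiableAt, fun x => ?_⟩
  apply ext_inner_right ℝ
  intro e
  rw [inner_gradient_left, (key x).fderiv]
  have hpm : Measurable (fun u : EuclideanSpace ℝ (Fin d) => ‖u‖⁻¹ • u) := by fun_prop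
  have hn : ∀ u : EuclideanSpace ℝ (Fin d), ‖‖u‖⁻¹ • u‖ ≤ 1 := by
    intro u
    rw [norm_smul, norm_inv, norm_norm]
    exact inv_mul_le_one
  have hGc : Continuous (fun v : EuclideanSpace ℝ (Fin d) =>
      (((d : ℝ) / μ) * (f (x + μ • v) - f x)) • v) := by fun_prop
  rw [sphereUniform, integral_map hpm.aemeasurable hGc.aestronglyMeasurable]
  obtain ⟨N, hN⟩ := (isCompact_closedBall (0 : EuclideanSpace ℝ (Fin d)) 1).exists_bound_of_continuousOn
    hGc.continuousOn
  have hGi : Integrable (fun u : EuclideanSpace ℝ (Fin d) =>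
      (((d : ℝ) / μ) * (f (x + μ • (‖u‖⁻¹ • u)) - f x)) • (‖u‖⁻¹ • u)) (ballUniform d) := by
    refine Integrable.of_bound (hGc.measurable.comp hpm).aestronglyMeasurable N ?_
    exact Filter.Eventually.of_forall fun u => hN _ (by simpa using hn u)
  obtain ⟨M, hM⟩ := (isCompact_closedBall (0 : EuclideanSpace ℝ (Fin d)) 1).exists_bound_of_continuousOn
    (f := fun u => fderiv ℝ f (x + μ • u)) (by fun_prop)
  have hDi : Integrable (fun u => fderiv ℝ f (x + μ • u)) (ballUniform d) := by
    refine Integrable.of_bound (by apply Continuous.aestronglyMeasurable; fun_prop) M ?_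
    filter_upwards [hae] with u hu
    exact hM u (by simpa using hu)
  rw [ContinuousLinearMap.integral_apply hDi, real_inner_comm, ← integral_inner hGi]
  have hk := SGS.key_eq' hd (fun u => f (x + μ • u) - f x) (by fun_prop) e
  have hder : ∀ u, fderiv ℝ (fun u => f (x + μ • u) - f x) u e = μ * fderiv ℝ f (x + μ • u) e := by
    intro u
    have h1 : HasFDerivAt (fun u : EuclideanSpace ℝ (Fin d) => x + μ • u)
      (μ • ContinuousLinearMap.id ℝ _) u := ((hasFDerivAt_id u).const_smul μ).const_add x
    have h2 := ((hfd (x + μ • u)).hasFDerivAt.comp u h1).sub_const (f x)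
    have h3 : fderiv ℝ (fun u => f (x + μ • u) - f x) u = _ := h2.fderiv
    rw [h3]
    simp
  simp_rw [hder] at hk
  rw [integral_const_mul] at hk
  simp only [ballUniform, integral_smul_measure]
  congr 1
  rw [← mul_right_inj' hμ.ne', hk, ← integral_const_mul, ← integral_const_mul]
  congr 1
  ext u
  rw [real_inner_smul_right, real_inner_smul_right, real_inner_comm]
  field_simp
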